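/- arXiv:1601.07109 — 2 statements merged into one kernel-verified Lean document; each statement's English description precedes it below -/
import Mathlib

section
/- Let R : P₂ → ℝ be Lebesgue measurable, satisfying the 6-term equation almost everywhere and the symmetry equation almost everywhere, let C ∈ ℝ, and let L : (0,1) → ℝ be Lebesgue measurable and solve the perturbed Spence-Abel system almost everywhere with data (R, C). Then L is essentially bounded on (0,1) if and only if R is essentially bounded on P₂. -/
open MeasureTheory Set

/-- The parameter space `P₂ = {(x,y) : 0 < x < y < 1}`. -/
def P2 : Set (ℝ × ℝ) := {p | 0 < p.1 ∧ p.1 < p.2 ∧ p.2 < 1}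

/-- The parameter space `P₃ = {(x,y,z) : 0 < x < y < z < 1}`. -/
def P3 : Set (ℝ × ℝ × ℝ) := {p | 0 < p.1 ∧ p.1 < p.2.1 ∧ p.2.1 < p.2.2 ∧ p.2.2 < 1}

/-- `L` solves the perturbed Spence–Abel system almost everywhere with data `(R, C)`. -/
def SolvesAE (R : ℝ × ℝ → ℝ) (C : ℝ) (L : ℝ → ℝ) : Prop :=
  (∀ᵐ p ∂(volume.restrict P2),
    L p.1 - L p.2 - L (p.1 / p.2) - L ((p.2 - 1) / (p.1 - 1))
      + L (p.1 * (p.2 - 1) / (p.2 * (p.1 - 1))) = R p) ∧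
  (∀ᵐ x ∂(volume.restrict (Set.Ioo (0:ℝ) 1)), L (1 - x) = C - L x)

/-- `R` satisfies the 6-term equation almost everywhere on `P₃`. -/
def SixTermAE (R : ℝ × ℝ → ℝ) : Prop :=
  ∀ᵐ p ∂(volume.restrict P3),
    R (p.1, p.2.1) - R (p.1, p.2.2) + R (p.2.1, p.2.2)
      - R (p.1 / p.2.2, p.2.1 / p.2.2)
      - R ((p.2.2 - 1) / (p.1 - 1), (p.2.2 - 1) / (p.2.1 - 1))
      + R (p.1 * (p.2.2 - 1) / (p.2.2 * (p.1 - 1)),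
           p.2.1 * (p.2.2 - 1) / (p.2.2 * (p.2.1 - 1))) = 0

/-- `R` satisfies the symmetry equation almost everywhere on `P₂`. -/
def SymmAE (R : ℝ × ℝ → ℝ) : Prop :=
  ∀ᵐ p ∂(volume.restrict P2), R (1 - p.2, (1 - p.2) / (1 - p.1)) = R p

theorem psa_pull2 (Q : ℝ × ℝ → Prop) (hQ : ∀ᵐ q, Q q) (S T : Set (ℝ × ℝ))
    (φ ψ : ℝ × ℝ → ℝ × ℝ) (hψ : DifferentiableOn ℝ ψ T)
    (h : ∀ p ∈ S, φ p ∈ T ∧ ψ (φ p) = p) : ∀ᵐ p, p ∈ S → Q (φ p) := by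
  have h0 : (volume : Measure (ℝ × ℝ)) (ψ '' (T ∩ {q | ¬ Q q})) = 0 :=
    addHaar_image_eq_zero_of_differentiableOn_of_addHaar_eq_zero _
      (hψ.mono inter_subset_left) (measure_mono_null inter_subset_right hQ)
  rw [ae_iff]
  refine measure_mono_null ?_ h0
  intro p hp
  simp only [mem_ofPred_eq, Classical.not_imp] at hp
  exact ⟨φ p, ⟨(h p hp.1).1, hp.2⟩, (h p hp.1).2⟩

theorem psa_pull1 (Q : ℝ → Prop) (hQ : ∀ᵐ q, Q q) (S T : Set ℝ)
    (φ ψ : ℝ → ℝ) (hψ : DifferentiableOn ℝ ψ T)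
    (h : ∀ p ∈ S, φ p ∈ T ∧ ψ (φ p) = p) : ∀ᵐ p, p ∈ S → Q (φ p) := by
  have h0 : (volume : Measure ℝ) (ψ '' (T ∩ {q | ¬ Q q})) = 0 :=
    addHaar_image_eq_zero_of_differentiableOn_of_addHaar_eq_zero _
      (hψ.mono inter_subset_left) (measure_mono_null inter_subset_right hQ)
  rw [ae_iff]
  refine measure_mono_null ?_ h0
  intro p hp
  simp only [mem_ofPred_eq, Classical.not_imp] at hp
  exact ⟨φ p, ⟨(h p hp.1).1, hp.2⟩, (h p hp.1).2⟩

theorem psa_fst (Q : ℝ → Prop) (hQ : ∀ᵐ q, Q q) : ∀ᵐ p : ℝ × ℝ, Q p.1 :=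
  Measure.quasiMeasurePreserving_fst.ae hQ

theorem psa_snd (Q : ℝ → Prop) (hQ : ∀ᵐ q, Q q) : ∀ᵐ p : ℝ × ℝ, Q p.2 :=
  Measure.quasiMeasurePreserving_snd.ae hQ

theorem psa_P2_meas : MeasurableSet P2 := by
  have : IsOpen P2 := by
    refine (isOpen_lt continuous_const continuous_fst).inter
      ((isOpen_lt continuous_fst continuous_snd).inter (isOpen_lt continuous_snd continuous_const))
  exact this.measurableSet

/-- ratio x/y -/
theorem psa_t3 (Q : ℝ → Prop) (hQ : ∀ᵐ q, Q q) : ∀ᵐ p : ℝ × ℝ, p ∈ P2 → Q (p.1 / p.2) := by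
  refine psa_pull2 (fun q => Q q.1) (psa_fst Q hQ) P2 univ (fun p => (p.1 / p.2, p.2))
    (fun q => (q.1 * q.2, q.2)) ?_ ?_
  · intro q _; fun_prop
  · rintro ⟨x, y⟩ ⟨h1, h2, h3⟩
    simp only at h1 h2 h3
    have : y ≠ 0 := by linarith
    refine ⟨mem_univ _, ?_⟩
    ext <;> simp
    field_simp

theorem psa_t4 (Q : ℝ → Prop) (hQ : ∀ᵐ q, Q q) :
    ∀ᵐ p : ℝ × ℝ, p ∈ P2 → Q ((p.2 - 1) / (p.1 - 1)) := by
  refine psa_pull2 (fun q => Q q.2) (psa_snd Q hQ) P2 univ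
    (fun p => (p.1, (p.2 - 1) / (p.1 - 1)))
    (fun q => (q.1, 1 + q.2 * (q.1 - 1))) ?_ ?_
  · intro q _; fun_prop
  · rintro ⟨x, y⟩ ⟨h1, h2, h3⟩
    simp only at h1 h2 h3
    have : x - 1 ≠ 0 := by linarith
    refine ⟨mem_univ _, ?_⟩
    ext <;> simp
    field_simp
    ring

theorem psa_t5 (Q : ℝ → Prop) (hQ : ∀ᵐ q, Q q) :
    ∀ᵐ p : ℝ × ℝ, p ∈ P2 → Q (p.1 * (p.2 - 1) / (p.2 * (p.1 - 1))) := by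
  refine psa_pull2 (fun q => Q q.2) (psa_snd Q hQ) P2 {q | q.1 + q.2 * (1 - q.1) ≠ 0}
    (fun p => (p.1, p.1 * (p.2 - 1) / (p.2 * (p.1 - 1))))
    (fun q => (q.1, q.1 / (q.1 + q.2 * (1 - q.1)))) ?_ ?_
  · intro q hq
    have : q.1 + q.2 * (1 - q.1) ≠ 0 := hq
    apply DifferentiableAt.differentiableWithinAt
    fun_prop (disch := assumption)
  · rintro ⟨x, y⟩ ⟨h1, h2, h3⟩
    simp only at h1 h2 h3
    have h4 : x - 1 ≠ 0 := by linarith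
    have h5 : y ≠ 0 := by linarith
    have h6 : x ≠ 0 := by linarith
    have e : x + x * (y - 1) / (y * (x - 1)) * (1 - x) = x / y := by
      field_simp
      ring
    refine ⟨?_, ?_⟩
    · simp only [mem_ofPred_eq, e]
      positivity
    · ext <;> simp only [e]
      field_simp

theorem psa_mem (x y : ℝ) (h : (x, y) ∈ P2) : x ∈ Ioo (0:ℝ) 1 ∧ y ∈ Ioo (0:ℝ) 1 ∧
    x / y ∈ Ioo (0:ℝ) 1 ∧ (y - 1) / (x - 1) ∈ Ioo (0:ℝ) 1 ∧
    x * (y - 1) / (y * (x - 1)) ∈ Ioo (0:ℝ) 1 := by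
  obtain ⟨h1, h2, h3⟩ := h
  simp only at h1 h2 h3
  have hx : 0 < 1 - x := by linarith
  have hy : 0 < y := by linarith
  have hy' : 0 < 1 - y := by linarith
  have e1 : (y - 1) / (x - 1) = (1 - y) / (1 - x) := by
    rw [← neg_div_neg_eq]; ring_nf
  have e2 : x * (y - 1) / (y * (x - 1)) = x * (1 - y) / (y * (1 - x)) := by
    rw [← neg_div_neg_eq]; ring_nf
  rw [e1, e2]
  refine ⟨⟨h1, by linarith⟩, ⟨by linarith, h3⟩, ⟨by positivity, ?_⟩, ⟨by positivity, ?_⟩,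
    ⟨by positivity, ?_⟩⟩
  · rw [div_lt_one hy]; exact h2
  · rw [div_lt_one hx]; linarith
  · rw [div_lt_one (by positivity)]; nlinarith

theorem psa_vol_image (ψ : ℝ → ℝ) (S E : Set ℝ) (c : ℝ) 
    (h : ∀ a ∈ S, ∀ b ∈ S, |ψ a - ψ b| ≤ c * |a - b|) :
    volume (ψ '' (E ∩ S)) ≤ ENNReal.ofReal c * volume E := by
  have hl : LipschitzOnWith (Real.toNNReal c) ψ (E ∩ S) := by
    apply LipschitzOnWith.of_dist_le_mul
    intro a ha b hb
    rw [Real.dist_eq, Real.dist_eq]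
    refine (h a ha.2 b hb.2).trans ?_
    gcongr
    exact Real.le_coe_toNNReal c
  have := hl.hausdorffMeasure_image_le (d := 1) zero_le_one
  rw [hausdorffMeasure_real] at this
  simp only [ENNReal.rpow_one] at this
  refine this.trans ?_
  gcongr
  · exact le_refl _
  · exact inter_subset_left

theorem psa_small (L : ℝ → ℝ) (hL : AEMeasurable L (volume.restrict (Set.Ioo (0:ℝ) 1)))
    (ε : ENNReal) (hε : 0 < ε) : ∃ M : ℝ, volume {x | x ∈ Ioo (0:ℝ) 1 ∧ M < |L x|} < ε := by
  have h1 := tendsto_measure_iInter_atTop (μ := volume.restrict (Set.Ioo (0:ℝ) 1))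
    (s := fun n : ℕ => {x | (n:ℝ) < |L x|}) (fun n => by
      exact nullMeasurableSet_lt aemeasurable_const hL.abs)
    (fun m n hmn x (hx : (n:ℝ) < |L x|) => lt_of_le_of_lt (by exact_mod_cast hmn) hx)
    ⟨0, measure_ne_top _ _⟩
  have h2 : (⋂ n : ℕ, {x | (n:ℝ) < |L x|}) = ∅ := by
    ext x
    simp only [mem_iInter, mem_ofPred_eq, mem_empty_iff_false, iff_false, not_forall, not_lt]
    exact exists_nat_ge _
  rw [h2, measure_empty] at h1
  obtain ⟨n, hn⟩ := (h1.eventually (gt_mem_nhds hε)).exists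
  refine ⟨n, ?_⟩
  simp only [Function.comp] at hn
  rw [Measure.restrict_apply' measurableSet_Ioo] at hn
  refine lt_of_le_of_lt (measure_mono ?_) hn
  intro x hx
  exact ⟨hx.2, hx.1⟩

/-- The abstract contraction lemma. -/
theorem psa_contract (g : ℝ → ℝ) (K : ℝ)
    (H : ∀ᵐ s : ℝ, ∀ᵐ t : ℝ, 0 < s → s ≤ t → t ≤ 6 * s → s + t ≤ 1 / 2 →
      |g s + g t - g (s + t)| ≤ K)
    (B0 : ℝ) (hB : ∀ᵐ s : ℝ, 1 / 14 ≤ s → s ≤ 1 / 2 → |g s| ≤ B0) :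
    ∃ B : ℝ, ∀ᵐ s : ℝ, 0 < s → s ≤ 1 / 2 → |g s| ≤ B := by
  set B := max B0 (2 * K) with hBdef
  refine ⟨B, ?_⟩
  have key : ∀ n : ℕ, ∀ᵐ s : ℝ, (1 / 14) * (1 / 2) ^ n ≤ s → s ≤ 1 / 2 → |g s| ≤ B := by
    intro n
    induction n with
    | zero =>
      filter_upwards [hB] with s hs h1 h2
      exact (hs (by linarith) h2).trans (le_max_left _ _)
    | succ n ih =>
      filter_upwards [H, ih] with s hs hs0 h1 h2
      by_cases hc : (1 / 14) * (1 / 2) ^ n ≤ s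
      · exact hs0 hc h2
      push Not at hc
      have hp : (0:ℝ) < (1 / 2) ^ n := by positivity
      have hp1 : ((1:ℝ) / 2) ^ n ≤ 1 := pow_le_one₀ (by norm_num) (by norm_num)
      have hp2 : ((1:ℝ) / 2) ^ (n + 1) = (1 / 2) ^ n * (1 / 2) := pow_succ _ _
      rw [hp2] at h1
      have hspos : 0 < s := by linarith
      have tr : ∀ (Q : ℝ → Prop), (∀ᵐ t : ℝ, Q t) → ∀ c : ℝ, ∀ᵐ t : ℝ, Q (t + c) := by
        intro Q hQ c
        exact (measurePreserving_add_right volume c).quasiMeasurePreserving.ae hQ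
      have hall : ∀ᵐ t : ℝ, t ∈ Ioo (2 * s) (3 * s) → |g s| ≤ B := by
        filter_upwards [hs, tr _ hs s, tr _ hs (2 * s), tr _ hs (3 * s), ih, tr _ ih (4 * s)]
          with t a0 a1 a2 a3 b0 b4 ht
        obtain ⟨ht1, ht2⟩ := ht
        have a0 := a0 hspos (by linarith) (by linarith) (by linarith)
        have a1 := a1 hspos (by linarith) (by linarith) (by linarith)
        have a2 := a2 hspos (by linarith) (by linarith) (by linarith)
        have a3 := a3 hspos (by linarith) (by linarith) (by linarith)
        have b0 := b0 (by linarith) (by linarith)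
        have b4 := b4 (by linarith) (by linarith)
        rw [show s + t = t + s by ring] at a0
        rw [show s + (t + s) = t + 2 * s by ring] at a1
        rw [show s + (t + 2 * s) = t + 3 * s by ring] at a2
        rw [show s + (t + 3 * s) = t + 4 * s by ring] at a3
        have hK : 2 * K ≤ B := le_max_right _ _
        rw [abs_le] at *
        constructor <;> linarith [a0.1, a0.2, a1.1, a1.2, a2.1, a2.2, a3.1, a3.2]
      have hpos : volume (Ioo (2 * s) (3 * s)) ≠ 0 := by
        rw [Real.volume_Ioo]
        simp; linarith
      by_contra hcon
      apply hpos
      rw [ae_iff] at hall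
      refine measure_mono_null ?_ hall
      intro t ht
      simp only [mem_ofPred_eq, Classical.not_imp]
      exact ⟨ht, hcon⟩
  have key2 := ae_all_iff.2 key
  filter_upwards [key2] with s hs h0 h1
  obtain ⟨n, hn⟩ := exists_pow_lt_of_lt_one (show (0:ℝ) < 14 * s by linarith) (show (1:ℝ)/2 < 1 by norm_num)
  exact hs n (by linarith) h1

/-- The five-term expression. -/
noncomputable def psaFive (L : ℝ → ℝ) (p : ℝ × ℝ) : ℝ :=
  L p.1 - L p.2 - L (p.1 / p.2) - L ((p.2 - 1) / (p.1 - 1))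
      + L (p.1 * (p.2 - 1) / (p.2 * (p.1 - 1)))

theorem psa_local (L : ℝ → ℝ) (hL : AEMeasurable L (volume.restrict (Set.Ioo (0:ℝ) 1)))
    (K : ℝ) (hF : ∀ᵐ p : ℝ × ℝ, p ∈ P2 → |psaFive L p| ≤ K) (δ : ℝ) (hδ : 0 < δ) :
    ∃ B : ℝ, ∀ᵐ x : ℝ, δ ≤ x → x ≤ 1 - δ → |L x| ≤ B := by
  obtain ⟨M, hM⟩ := psa_small L hL (ENNReal.ofReal (δ ^ 2 / 8))
    (ENNReal.ofReal_pos.2 (by positivity))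
  refine ⟨4 * M + K, ?_⟩
  have hF2 : ∀ᵐ x : ℝ, ∀ᵐ y : ℝ, (x, y) ∈ P2 → |psaFive L (x, y)| ≤ K :=
    Measure.ae_ae_of_ae_prod hF
  filter_upwards [hF2] with x hx hx1 hx2
  set E := {x | x ∈ Ioo (0:ℝ) 1 ∧ M < |L x|} with hE
  have hx0 : 0 < x := by linarith
  have hx' : 0 < 1 - x := by linarith
  have hd1 : 1 ≤ 1 / δ := by rw [le_div_iff₀ hδ]; linarith
  have hxd : 1 / x ≤ 1 / δ := one_div_le_one_div_of_le hδ hx1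
  have v1 := psa_vol_image (fun u => u) univ E (1 / δ) (by
    intro a _ b _
    nlinarith [abs_nonneg (a - b)])
  have v2 := psa_vol_image (fun u => x / u) (Ioi x) E (1 / δ) (by
    intro a ha b hb
    have ha : x < a := ha
    have hb : x < b := hb
    have ha0 : 0 < a := by linarith
    have hb0 : 0 < b := by linarith
    have e : x / a - x / b = x / (a * b) * (b - a) := by field_simp
    simp only [e]
    rw [abs_mul, abs_sub_comm b a, abs_of_pos (by positivity)]
    refine mul_le_mul_of_nonneg_right ?_ (abs_nonneg _)
    refine le_trans ?_ hxd
    rw [div_le_div_iff₀ (by positivity) hx0]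
    nlinarith)
  have v3 := psa_vol_image (fun u => 1 + u * (x - 1)) univ E (1 / δ) (by
    intro a _ b _
    have e : (1 + a * (x - 1)) - (1 + b * (x - 1)) = (1 - x) * (b - a) := by ring
    simp only [e]
    rw [abs_mul, abs_sub_comm b a, abs_of_pos hx']
    gcongr
    linarith)
  have v4 := psa_vol_image (fun u => x / (x + u * (1 - x))) (Ioi 0) E (1 / δ) (by
    intro a ha b hb
    have ha : 0 < a := ha
    have hb : 0 < b := hb
    have e : x / (x + a * (1 - x)) - x / (x + b * (1 - x))
      = x * (1 - x) / ((x + a * (1 - x)) * (x + b * (1 - x))) * (b - a) := by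
      field_simp
      ring
    simp only [e]
    rw [abs_mul, abs_sub_comm b a, abs_of_pos (by positivity)]
    refine mul_le_mul_of_nonneg_right ?_ (abs_nonneg _)
    refine le_trans ?_ hxd
    rw [div_le_div_iff₀ (by positivity) hx0]
    have : 0 < a * (1 - x) := by positivity
    have : 0 < b * (1 - x) := by positivity
    nlinarith [mul_pos hx0 this, mul_pos hx0 ‹0 < a * (1 - x)›,
      mul_pos ‹0 < a * (1 - x)› this, mul_pos (mul_pos hx0 hx0) hx0])
  set N := {y | ¬ ((x, y) ∈ P2 → |psaFive L (x, y)| ≤ K)} with hN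
  have hN0 : volume N = 0 := hx
  by_contra hcon
  have hsub : Ioo x 1 ⊆ N ∪ ((fun u => u) '' (E ∩ univ) ∪ ((fun u => x / u) '' (E ∩ Ioi x) ∪
      ((fun u => 1 + u * (x - 1)) '' (E ∩ univ) ∪
        (fun u => x / (x + u * (1 - x))) '' (E ∩ Ioi 0)))) := by
    intro y hy
    have hP : (x, y) ∈ P2 := ⟨hx0, hy.1, hy.2⟩
    have hy0 : 0 < y := lt_trans hx0 hy.1
    obtain ⟨m1, m2, m3, m4, m5⟩ := psa_mem x y hP
    by_contra hno
    simp only [mem_union, not_or] at hno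
    obtain ⟨n0, n1, n2, n3, n4⟩ := hno
    have n0 : |psaFive L (x, y)| ≤ K := by
      by_contra hh
      exact n0 (fun h => hh (h hP))
    have q1 : |L y| ≤ M := by
      by_contra hh
      exact n1 ⟨y, ⟨⟨m2, not_le.1 hh⟩, mem_univ _⟩, rfl⟩
    have q2 : |L (x / y)| ≤ M := by
      by_contra hh
      refine n2 ⟨x / y, ⟨⟨m3, not_le.1 hh⟩, ?_⟩, ?_⟩
      · show x < x / y
        rw [lt_div_iff₀ hy0]
        nlinarith [hy.2]
      · simp only
        field_simp
    have hx1' : x - 1 ≠ 0 := by linarith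
    have q3 : |L ((y - 1) / (x - 1))| ≤ M := by
      by_contra hh
      refine n3 ⟨(y - 1) / (x - 1), ⟨⟨m4, not_le.1 hh⟩, mem_univ _⟩, ?_⟩
      simp only
      field_simp
      ring
    have q4 : |L (x * (y - 1) / (y * (x - 1)))| ≤ M := by
      by_contra hh
      refine n4 ⟨x * (y - 1) / (y * (x - 1)), ⟨⟨m5, not_le.1 hh⟩, m5.1⟩, ?_⟩
      have e : x + x * (y - 1) / (y * (x - 1)) * (1 - x) = x / y := by
        field_simp
        ring
      simp only [e]
      field_simp
    apply hcon
    simp only [psaFive] at n0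
    rw [abs_le] at *
    constructor <;> linarith [q1.1, q1.2, q2.1, q2.2, q3.1, q3.2, q4.1, q4.2, n0.1, n0.2]
  have hb : volume (Ioo x 1) ≤ ENNReal.ofReal (δ / 2) := by
    have hs : ENNReal.ofReal (1 / δ) * volume E ≤ ENNReal.ofReal (δ / 8) := by
      calc ENNReal.ofReal (1 / δ) * volume E
          ≤ ENNReal.ofReal (1 / δ) * ENNReal.ofReal (δ ^ 2 / 8) := by gcongr
        _ = ENNReal.ofReal (δ / 8) := by
          rw [← ENNReal.ofReal_mul (by positivity)]
          congr 1
          field_simp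
    calc volume (Ioo x 1) ≤ _ := measure_mono hsub
      _ ≤ 0 + (ENNReal.ofReal (δ / 8) + (ENNReal.ofReal (δ / 8) +
          (ENNReal.ofReal (δ / 8) + ENNReal.ofReal (δ / 8)))) := by
        refine (measure_union_le _ _).trans (add_le_add hN0.le ?_)
        refine (measure_union_le _ _).trans (add_le_add (v1.trans hs) ?_)
        refine (measure_union_le _ _).trans (add_le_add (v2.trans hs) ?_)
        exact (measure_union_le _ _).trans (add_le_add (v3.trans hs) (v4.trans hs))
      _ = ENNReal.ofReal (δ / 2) := by
        rw [zero_add, ← ENNReal.ofReal_add (by positivity) (by positivity),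
          ← ENNReal.ofReal_add (by positivity) (by positivity),
          ← ENNReal.ofReal_add (by positivity) (by positivity)]
        congr 1
        ring
  rw [Real.volume_Ioo, ENNReal.ofReal_le_ofReal_iff (by positivity)] at hb
  linarith

theorem psa_exp_bounds (s : ℝ) (h0 : 0 < s) (h1 : s ≤ 1 / 2) :
    s / 2 ≤ 1 - Real.exp (-s) ∧ 1 - Real.exp (-s) ≤ s ∧ 1 / 2 ≤ Real.exp (-s) ∧
      Real.exp (-s) < 1 := by
  have a := Real.add_one_le_exp (-s)
  have b := Real.add_one_le_exp s
  have c : Real.exp (-s) * Real.exp s = 1 := by rw [← Real.exp_add]; simp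
  have d := Real.exp_pos (-s)
  have e : Real.exp (-s) * (s + 1) ≤ 1 := by nlinarith
  refine ⟨?_, by linarith, by linarith, ?_⟩ <;> nlinarith

theorem psa_quasi (L : ℝ → ℝ) (K B : ℝ)
    (hF : ∀ᵐ p : ℝ × ℝ, p ∈ P2 → |psaFive L p| ≤ K)
    (hB : ∀ᵐ x : ℝ, 1 / 28 ≤ x → x ≤ 1 - 1 / 28 → |L x| ≤ B) :
    ∀ᵐ s : ℝ, ∀ᵐ t : ℝ, 0 < s → s ≤ t → t ≤ 6 * s → s + t ≤ 1 / 2 →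
      |L (1 - Real.exp (-s)) + L (1 - Real.exp (-t)) - L (1 - Real.exp (-(s + t)))|
        ≤ K + 2 * B := by
  have hQ : ∀ᵐ q : ℝ × ℝ, q ∈ P2 → (|psaFive L q| ≤ K ∧
      (1 / 28 ≤ q.2 → q.2 ≤ 1 - 1 / 28 → |L q.2| ≤ B) ∧
      (1 / 28 ≤ (q.2 - 1) / (q.1 - 1) → (q.2 - 1) / (q.1 - 1) ≤ 1 - 1 / 28 →
        |L ((q.2 - 1) / (q.1 - 1))| ≤ B)) := by
    filter_upwards [hF, psa_snd _ hB, psa_t4 _ hB] with q h1 h2 h3 hq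
    exact ⟨h1 hq, h2, h3 hq⟩
  have alg : ∀ a c : ℝ, 0 < a → a < 1 → 0 < c → c < 1 →
      ((1 - a, (1 - a) / (1 - a * c)) ∈ P2 ∧ (1 - a) / ((1 - a) / (1 - a * c)) = 1 - a * c ∧
      ((1 - a) / (1 - a * c) - 1) / ((1 - a) - 1) = (1 - c) / (1 - a * c) ∧
      (1 - a) * ((1 - a) / (1 - a * c) - 1) / ((1 - a) / (1 - a * c) * ((1 - a) - 1)) = 1 - c)
      := by
    intro a c ha ha1 hc hc1
    have hac : a * c < a := by nlinarith
    have hu : 0 < 1 - a * c := by linarith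
    have h1a : 0 < 1 - a := by linarith
    have e0 : (1 - a) - 1 = -a := by ring
    have e1 : (1 - a) / (1 - a * c) - 1 = - (a * (1 - c)) / (1 - a * c) := by
      field_simp
      ring
    refine ⟨⟨h1a, ?_, ?_⟩, ?_, ?_, ?_⟩
    · show 1 - a < (1 - a) / (1 - a * c)
      rw [lt_div_iff₀ hu]
      nlinarith [mul_pos h1a (mul_pos ha hc)]
    · show (1 - a) / (1 - a * c) < 1
      rw [div_lt_one hu]
      linarith
    · field_simp
    · rw [e0, e1]
      field_simp
    · rw [e0, e1]
      field_simp
  have ex1 : ∀ s : ℝ, 0 < s → Real.exp (-s) < 1 := fun s hs => by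
    rw [Real.exp_lt_one_iff]; linarith
  have hpull := psa_pull2 _ hQ {p | 0 < p.1 ∧ 0 < p.2} P2
    (fun p => (1 - Real.exp (-p.1),
      (1 - Real.exp (-p.1)) / (1 - Real.exp (-p.1) * Real.exp (-p.2))))
    (fun q => (-Real.log (1 - q.1), -Real.log (1 - q.1 * (q.2 - 1) / (q.2 * (q.1 - 1))))) (by
      rintro ⟨x, y⟩ hq
      obtain ⟨m1, m2, m3, m4, m5⟩ := psa_mem x y hq
      have n1 : 1 - x ≠ 0 := by linarith [m1.2]
      have n2 : 1 - x * (y - 1) / (y * (x - 1)) ≠ 0 := by linarith [m5.2]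
      have n3 : y * (x - 1) ≠ 0 := mul_ne_zero (by linarith [m2.1]) (by linarith [m1.2])
      apply DifferentiableAt.differentiableWithinAt
      fun_prop (disch := assumption)) (by
      rintro ⟨s, t⟩ ⟨hs, ht⟩
      simp only at hs ht
      obtain ⟨r1, r2, r3, r4⟩ := alg (Real.exp (-s)) (Real.exp (-t)) (Real.exp_pos _) (ex1 s hs)
        (Real.exp_pos _) (ex1 t ht)
      refine ⟨r1, ?_⟩
      simp only [r4]
      simp)
  have h2 : ∀ᵐ s : ℝ, ∀ᵐ t : ℝ, _ := Measure.ae_ae_of_ae_prod hpull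
  filter_upwards [h2] with s hs
  filter_upwards [hs] with t ht h0 hst ht6 hsum
  have ht0 : 0 < t := by linarith
  obtain ⟨a1, a2, a3, a4⟩ := psa_exp_bounds s h0 (by linarith)
  obtain ⟨c1, c2, c3, c4⟩ := psa_exp_bounds t ht0 (by linarith)
  obtain ⟨u1, u2, u3, u4⟩ := psa_exp_bounds (s + t) (by linarith) hsum
  have hac : Real.exp (-(s + t)) = Real.exp (-s) * Real.exp (-t) := by
    rw [← Real.exp_add]; congr 1; ring
  rw [hac] at u1 u2 u3 u4 ⊢
  set a := Real.exp (-s)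
  set c := Real.exp (-t)
  obtain ⟨r1, r2, r3, r4⟩ := alg a c (by linarith) a4 (by linarith) c4
  obtain ⟨f1, f2, f3⟩ := ht ⟨h0, ht0⟩ r1
  simp only [psaFive] at f1 f2 f3
  rw [r2, r4] at f1
  rw [r3] at f1 f3
  have hu : 0 < 1 - a * c := by linarith
  have y1 : 1 / 14 ≤ (1 - a) / (1 - a * c) := by
    rw [le_div_iff₀ hu]; linarith
  have w1 : 1 / 14 ≤ (1 - c) / (1 - a * c) := by
    rw [le_div_iff₀ hu]; linarith
  have y2 : 1 - (1 - a) / (1 - a * c) = a * ((1 - c) / (1 - a * c)) := by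
    field_simp; ring
  have w2 : 1 - (1 - c) / (1 - a * c) = c * ((1 - a) / (1 - a * c)) := by
    rw [← mul_div_assoc, eq_div_iff hu.ne', sub_mul, div_mul_cancel₀ _ hu.ne']
    ring
  have y3 : 1 / 28 ≤ a * ((1 - c) / (1 - a * c)) := by nlinarith
  have w3 : 1 / 28 ≤ c * ((1 - a) / (1 - a * c)) := by nlinarith
  have g2 := f2 (by linarith) (by linarith)
  have g3 := f3 (by linarith) (by linarith)
  rw [abs_le] at *
  constructor <;> linarith [f1.1, f1.2, g2.1, g2.2, g3.1, g3.2]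

theorem psa_backward (C : ℝ) (L : ℝ → ℝ)
    (hL : AEMeasurable L (volume.restrict (Set.Ioo (0:ℝ) 1)))
    (K : ℝ) (hF : ∀ᵐ p : ℝ × ℝ, p ∈ P2 → |psaFive L p| ≤ K)
    (hC : ∀ᵐ x : ℝ, x ∈ Ioo (0:ℝ) 1 → L (1 - x) = C - L x) :
    ∃ M : ℝ, ∀ᵐ x : ℝ, x ∈ Ioo (0:ℝ) 1 → |L x| ≤ M := by
  obtain ⟨B, hB⟩ := psa_local L hL K hF (1 / 28) (by norm_num)
  have hdl : DifferentiableOn ℝ (fun x : ℝ => -Real.log (1 - x)) (Iio 1) := by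
    intro x hx
    have hx : x < 1 := hx
    have : 1 - x ≠ 0 := by linarith
    apply DifferentiableAt.differentiableWithinAt
    fun_prop (disch := assumption)
  have hg0 := psa_pull1 _ hB univ (Iio 1) (fun s => 1 - Real.exp (-s))
    (fun x => -Real.log (1 - x)) hdl (by
      intro s _
      refine ⟨?_, by simp⟩
      show 1 - Real.exp (-s) < 1
      linarith [Real.exp_pos (-s)])
  obtain ⟨D, hD⟩ := psa_contract (fun s => L (1 - Real.exp (-s))) (K + 2 * B)
    (psa_quasi L K B hF hB) B (by
      filter_upwards [hg0] with s hs h1 h2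
      obtain ⟨a1, a2, a3, a4⟩ := psa_exp_bounds s (by linarith) h2
      exact hs (mem_univ _) (by linarith) (by linarith))
  have h1 : ∀ᵐ x : ℝ, 0 < x → x ≤ 1 / 4 → |L x| ≤ D := by
    have := psa_pull1 _ hD (Iio 1) univ (fun x => -Real.log (1 - x))
      (fun s => 1 - Real.exp (-s)) (by intro s _; fun_prop) (by
        intro x hx
        have hx : x < 1 := hx
        refine ⟨mem_univ _, ?_⟩
        simp only [neg_neg]
        rw [Real.exp_log (by linarith)]; ring)
    filter_upwards [this] with x hx h0 h4
    have h5 : (0:ℝ) < 1 - x := by linarith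
    have := hx (by show x < 1; linarith) (by
      have := Real.log_neg h5 (by linarith); linarith) (by
      have h6 := Real.one_sub_inv_le_log_of_pos h5
      have h7 : (1 - x)⁻¹ ≤ 4 / 3 := by
        rw [inv_le_comm₀ h5 (by norm_num)]; linarith
      linarith)
    simp only [neg_neg] at this
    rwa [Real.exp_log h5, sub_sub_cancel] at this
  have h2 := psa_pull1 _ h1 univ univ (fun x => 1 - x) (fun x => 1 - x)
    (by intro s _; fun_prop) (by intro x _; exact ⟨mem_univ _, by ring⟩)
  refine ⟨max B (D + |C|), ?_⟩
  filter_upwards [h1, h2, hC, hB] with x k1 k2 k3 k4 hx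
  have hCx := k3 hx
  obtain ⟨x0, x1⟩ := hx
  by_cases c1 : x ≤ 1 / 4
  · exact (k1 x0 c1).trans (le_trans (by linarith [abs_nonneg C]) (le_max_right _ _))
  by_cases c2 : x ≤ 1 - 1 / 4
  · exact (k4 (by linarith) (by linarith)).trans (le_max_left _ _)
  have k5 := k2 (mem_univ _) (by linarith) (by linarith)
  refine le_trans ?_ (le_max_right _ _)
  have : L x = C - L (1 - x) := by linarith
  rw [this]
  linarith [abs_sub C (L (1 - x))]

/-- **Boundedness** for the perturbed Spence–Abel system: the solution `L` is essentially
bounded on `(0,1)` if and only if `R` is essentially bounded on `P₂`. -/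
theorem perturbed_spence_abel_boundedness (R : ℝ × ℝ → ℝ)
    (hR : AEMeasurable R (volume.restrict P2)) (h6 : SixTermAE R) (hsym : SymmAE R)
    (C : ℝ) (L : ℝ → ℝ)
    (hL : AEMeasurable L (volume.restrict (Set.Ioo (0:ℝ) 1)))
    (hsol : SolvesAE R C L) :
    (∃ M : ℝ, ∀ᵐ x ∂(volume.restrict (Set.Ioo (0:ℝ) 1)), |L x| ≤ M) ↔
      (∃ M : ℝ, ∀ᵐ p ∂(volume.restrict P2), |R p| ≤ M) := by
  obtain ⟨hs1, hs2⟩ := hsol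
  rw [ae_restrict_iff' psa_P2_meas] at hs1
  rw [ae_restrict_iff' measurableSet_Ioo] at hs2
  simp only [ae_restrict_iff' psa_P2_meas, ae_restrict_iff' (measurableSet_Ioo (a := (0:ℝ)) (b := 1))]
  constructor
  · rintro ⟨M, hM⟩
    refine ⟨5 * M, ?_⟩
    filter_upwards [hs1, psa_fst _ hM, psa_snd _ hM, psa_t3 _ hM, psa_t4 _ hM, psa_t5 _ hM]
      with p h0 h1 h2 h3 h4 h5 hp
    obtain ⟨m1, m2, m3, m4, m5⟩ := psa_mem p.1 p.2 hp
    have h1 := h1 m1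
    have h2 := h2 m2
    have h3 := h3 hp m3
    have h4 := h4 hp m4
    have h5 := h5 hp m5
    rw [← h0 hp]
    rw [abs_le] at *
    constructor <;> linarith [h1.1, h1.2, h2.1, h2.2, h3.1, h3.2, h4.1, h4.2, h5.1, h5.2]
  · rintro ⟨K, hK⟩
    refine psa_backward C L hL K ?_ hs2
    filter_upwards [hs1, hK] with p h1 h2 hp
    rw [psaFive, h1 hp]
    exact h2 hp
end

section
/- Let R : P₂ → ℝ be Lebesgue measurable and essentially bounded, satisfying the 6-term equation almost everywhere and the symmetry equation almost everywhere, let C ∈ ℝ, let L : (0,1) → ℝ be Lebesgue measurable and solve the perturbed Spence-Abel system almost everywhere with data (R, C), and let k ∈ ℕ ∪ {∞}. Then L agrees almost everywhere with a function of class C^k on the interval (0,1) if and only if R agrees almost everywhere with a function of class C^k on the open set P₂. -/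
open MeasureTheory Set

structure Good (T S D : ℝ → ℝ → ℝ) : Prop where
  meas : Measurable (fun p : ℝ × ℝ => T p.1 p.2)
  contT : ContinuousOn (fun p : ℝ × ℝ => T p.1 p.2) P2
  maps : ∀ x y, (x, y) ∈ P2 → T x y ∈ Ioo (0:ℝ) 1
  left : ∀ x y, (x, y) ∈ P2 → S x (T x y) = y
  right : ∀ x ∈ Ioo (0:ℝ) 1, ∀ u ∈ Ioo (0:ℝ) 1, T x (S x u) = u
  der : ∀ x ∈ Ioo (0:ℝ) 1, ∀ u ∈ Ioo (0:ℝ) 1, HasDerivAt (S x) (D x u) u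
  smS : ContDiffOn ℝ (⊤ : ℕ∞) (fun p : ℝ × ℝ => S p.1 p.2) (Ioo (0:ℝ) 1 ×ˢ Ioo (0:ℝ) 1)
  smD : ContDiffOn ℝ (⊤ : ℕ∞) (fun p : ℝ × ℝ => |D p.1 p.2|) (Ioo (0:ℝ) 1 ×ˢ Ioo (0:ℝ) 1)

lemma good2 : Good (fun _ y => y) (fun _ u => u) (fun _ _ => 1) where
  meas := by fun_prop
  contT := by fun_prop
  maps := by rintro x y ⟨h1, h2, h3⟩; exact ⟨by simp at *; linarith, h3⟩
  left := by simp
  right := by simp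
  der := fun x _ u _ => hasDerivAt_id u
  smS := by fun_prop
  smD := by fun_prop

lemma good3 : Good (fun x y => x / y) (fun x u => x / u) (fun x u => -x / u ^ 2) where
  meas := by fun_prop
  contT := by
    rintro ⟨x, y⟩ ⟨h1, h2, h3⟩
    simp only at h1 h2 h3
    have : y ≠ 0 := by linarith
    exact ContinuousAt.continuousWithinAt (by fun_prop (disch := assumption))
  maps := by
    rintro x y ⟨h1, h2, h3⟩
    simp only at h1 h2 h3
    exact ⟨by apply div_pos <;> linarith, by rw [div_lt_one] <;> linarith⟩
  left := by
    rintro x y ⟨h1, h2, h3⟩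
    simp only at h1 h2 h3
    have : y ≠ 0 := by linarith
    field_simp
  right := by
    rintro x ⟨h1, h2⟩ u ⟨h3, h4⟩
    show x / (x / u) = u
    field_simp
  der := by
    rintro x ⟨h1, h2⟩ u ⟨h3, h4⟩
    have := (hasDerivAt_inv h3.ne').const_mul x
    simp only [← div_eq_mul_inv] at this
    exact this.congr_deriv (by ring)
  smS := by
    apply ContDiffOn.div contDiffOn_fst contDiffOn_snd
    rintro ⟨x, u⟩ ⟨_, hu⟩; exact hu.1.ne'
  smD := by
    have : ContDiffOn ℝ (⊤ : ℕ∞) (fun p : ℝ × ℝ => p.1 / p.2 ^ 2)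
        (Ioo (0:ℝ) 1 ×ˢ Ioo (0:ℝ) 1) := by
      apply ContDiffOn.div contDiffOn_fst (contDiffOn_snd.pow 2)
      rintro ⟨x, u⟩ ⟨_, hu⟩; exact pow_ne_zero 2 hu.1.ne'
    apply this.congr
    rintro ⟨x, u⟩ ⟨⟨h1, _⟩, ⟨h3, _⟩⟩
    simp only at h1 h3 ⊢
    rw [abs_div, abs_neg, abs_of_pos h1, abs_of_pos (by positivity)]

lemma good4 : Good (fun x y => (y - 1) / (x - 1)) (fun x u => 1 - u * (1 - x))
    (fun x _ => -(1 - x)) where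
  meas := by fun_prop
  contT := by
    rintro ⟨x, y⟩ ⟨h1, h2, h3⟩
    simp only at h1 h2 h3
    have : x - 1 ≠ 0 := by linarith
    exact ContinuousAt.continuousWithinAt (by fun_prop (disch := assumption))
  maps := by
    rintro x y ⟨h1, h2, h3⟩
    simp only at h1 h2 h3
    exact ⟨by apply div_pos_of_neg_of_neg <;> linarith,
      by rw [div_lt_one_of_neg] <;> linarith⟩
  left := by
    rintro x y ⟨h1, h2, h3⟩
    simp only at h1 h2 h3
    have : x - 1 ≠ 0 := by linarith
    field_simp
    ring
  right := by
    rintro x ⟨h1, h2⟩ u ⟨h3, h4⟩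
    have : x - 1 ≠ 0 := by linarith
    field_simp
    ring
  der := by
    rintro x ⟨h1, h2⟩ u ⟨h3, h4⟩
    simpa using ((hasDerivAt_id u).mul_const (1 - x)).const_sub 1
  smS := by fun_prop
  smD := by
    have : ContDiffOn ℝ (⊤ : ℕ∞) (fun p : ℝ × ℝ => 1 - p.1)
        (Ioo (0:ℝ) 1 ×ˢ Ioo (0:ℝ) 1) := by fun_prop
    apply this.congr
    rintro ⟨x, u⟩ ⟨⟨h1, h2⟩, ⟨h3, _⟩⟩
    simp only at h2 ⊢
    rw [abs_neg, abs_of_pos (by linarith)]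

lemma good5 : Good (fun x y => x * (y - 1) / (y * (x - 1))) (fun x u => x / (x + u * (1 - x)))
    (fun x u => -(x * (1 - x)) / (x + u * (1 - x)) ^ 2) where
  meas := by fun_prop
  contT := by
    rintro ⟨x, y⟩ ⟨h1, h2, h3⟩
    simp only at h1 h2 h3
    have : y * (x - 1) ≠ 0 := mul_ne_zero (by linarith) (by linarith)
    exact ContinuousAt.continuousWithinAt (by fun_prop (disch := assumption))
  maps := by
    rintro x y ⟨h1, h2, h3⟩
    simp only at h1 h2 h3
    have h4 : y * (x - 1) < 0 := by nlinarith
    refine ⟨div_pos_of_neg_of_neg (by nlinarith) h4, ?_⟩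
    rw [div_lt_one_of_neg h4]; nlinarith
  left := by
    rintro x y ⟨h1, h2, h3⟩
    simp only at h1 h2 h3
    have : x - 1 ≠ 0 := by linarith
    have : y ≠ 0 := by linarith
    have e : x + x * (y - 1) / (y * (x - 1)) * (1 - x) = x / y := by
      field_simp
      ring
    show x / (x + x * (y - 1) / (y * (x - 1)) * (1 - x)) = y
    rw [e]
    field_simp
  right := by
    rintro x ⟨h1, h2⟩ u ⟨h3, h4⟩
    have : x - 1 ≠ 0 := by linarith
    have : 0 < u * (1 - x) := mul_pos h3 (by linarith)
    have : x + u * (1 - x) ≠ 0 := by linarith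
    field_simp
    ring
  der := by
    rintro x ⟨h1, h2⟩ u ⟨h3, h4⟩
    have : 0 < u * (1 - x) := mul_pos h3 (by linarith)
    have h0 : x + u * (1 - x) ≠ 0 := by linarith
    have := (((hasDerivAt_id u).mul_const (1 - x)).const_add x)
    have := (hasDerivAt_const u x).fun_div this h0
    exact this.congr_deriv (by simp)
  smS := by
    apply ContDiffOn.div contDiffOn_fst (by fun_prop)
    rintro ⟨x, u⟩ ⟨⟨h1, h2⟩, ⟨h3, _⟩⟩
    simp only at h1 h2 h3 ⊢
    have : 0 < u * (1 - x) := mul_pos h3 (by linarith)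
    linarith
  smD := by
    have : ContDiffOn ℝ (⊤ : ℕ∞) (fun p : ℝ × ℝ => p.1 * (1 - p.1) / (p.1 + p.2 * (1 - p.1)) ^ 2)
        (Ioo (0:ℝ) 1 ×ˢ Ioo (0:ℝ) 1) := by
      apply ContDiffOn.div (by fun_prop) (by fun_prop)
      rintro ⟨x, u⟩ ⟨⟨h1, h2⟩, ⟨h3, _⟩⟩
      simp only at h1 h2 h3 ⊢
      have : 0 < u * (1 - x) := mul_pos h3 (by linarith)
      positivity
    apply this.congr
    rintro ⟨x, u⟩ ⟨⟨h1, h2⟩, ⟨h3, _⟩⟩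
    simp only at h1 h2 h3 ⊢
    have : 0 < 1 - x := by linarith
    rw [abs_div, abs_neg, abs_of_pos (by positivity), abs_of_pos (by positivity)]

lemma isOpen_P2 : IsOpen P2 := by
  have : P2 = {p : ℝ × ℝ | 0 < p.1} ∩ ({p | p.1 < p.2} ∩ {p | p.2 < 1}) := rfl
  rw [this]
  exact (isOpen_lt (by fun_prop) (by fun_prop)).inter
    ((isOpen_lt (by fun_prop) (by fun_prop)).inter (isOpen_lt (by fun_prop) (by fun_prop)))

lemma P2_fst {x y : ℝ} (h : (x, y) ∈ P2) : x ∈ Ioo (0:ℝ) 1 := ⟨h.1, h.2.1.trans h.2.2⟩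

lemma Good.null_pre {T S D : ℝ → ℝ → ℝ} (hT : Good T S D) {N : Set ℝ} (hN : volume N = 0)
    (x : ℝ) : volume {y | (x, y) ∈ P2 ∧ T x y ∈ N} = 0 := by
  by_cases hx : x ∈ Ioo (0:ℝ) 1
  · refine measure_mono_null (t := S x '' (N ∩ Ioo 0 1)) ?_ ?_
    · rintro y ⟨h1, h2⟩
      exact ⟨T x y, ⟨h2, hT.maps x y h1⟩, hT.left x y h1⟩
    · apply addHaar_image_eq_zero_of_differentiableOn_of_addHaar_eq_zero
      · intro u hu
        exact (hT.der x hx u hu.2).differentiableAt.differentiableWithinAt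
      · exact measure_mono_null inter_subset_left hN
  · have : {y | (x, y) ∈ P2 ∧ T x y ∈ N} = ∅ := by
      ext y
      simp only [mem_ofPred_eq, mem_empty_iff_false, iff_false]
      rintro ⟨h, _⟩
      exact hx (P2_fst h)
    rw [this]; simp

lemma Good.ae_comp {T S D : ℝ → ℝ → ℝ} (hT : Good T S D) {p : ℝ → Prop}
    (h : ∀ᵐ u ∂(volume.restrict (Ioo (0:ℝ) 1)), p u) :
    ∀ᵐ q ∂(volume.restrict P2), p (T q.1 q.2) := by
  rw [ae_restrict_iff' measurableSet_Ioo] at h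
  rw [ae_restrict_iff' isOpen_P2.measurableSet]
  obtain ⟨N, hsub, hNm, hN⟩ := exists_measurable_superset_of_null (ae_iff.1 h)
  rw [ae_iff]
  refine measure_mono_null (t := {q : ℝ × ℝ | q ∈ P2 ∧ T q.1 q.2 ∈ N}) ?_ ?_
  · rintro ⟨x, y⟩ hq
    simp only [mem_ofPred_eq, Classical.not_imp] at hq ⊢
    refine ⟨hq.1, hsub ?_⟩
    simp only [mem_ofPred_eq, Classical.not_imp]
    exact ⟨hT.maps x y hq.1, hq.2⟩
  · rw [Measure.volume_eq_prod, Measure.measure_prod_null]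
    · exact Filter.Eventually.of_forall fun x => hT.null_pre hN x
    · exact isOpen_P2.measurableSet.inter (hT.meas hNm)

lemma ae_comp_fst {p : ℝ → Prop}
    (h : ∀ᵐ u ∂(volume.restrict (Ioo (0:ℝ) 1)), p u) :
    ∀ᵐ q ∂(volume.restrict P2), p q.1 := by
  rw [ae_restrict_iff' measurableSet_Ioo] at h
  rw [ae_restrict_iff' isOpen_P2.measurableSet]
  have := (Measure.quasiMeasurePreserving_fst (μ := (volume : Measure ℝ))
    (ν := (volume : Measure ℝ))).ae h
  filter_upwards [this] with q hq hq2 using hq (P2_fst hq2)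

/-- The left hand side of the five-term equation. -/
noncomputable def five (L : ℝ → ℝ) (p : ℝ × ℝ) : ℝ :=
  L p.1 - L p.2 - L (p.1 / p.2) - L ((p.2 - 1) / (p.1 - 1))
      + L (p.1 * (p.2 - 1) / (p.2 * (p.1 - 1)))

lemma five_congr {L g : ℝ → ℝ} (h : ∀ᵐ x ∂(volume.restrict (Ioo (0:ℝ) 1)), L x = g x) :
    ∀ᵐ p ∂(volume.restrict P2), five L p = five g p := by
  filter_upwards [ae_comp_fst h, good2.ae_comp h, good3.ae_comp h, good4.ae_comp h,
    good5.ae_comp h] with p h1 h2 h3 h4 h5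
  simp only [five, h1, h2, h3, h4, h5]

lemma five_contDiffOn {g : ℝ → ℝ} {k : ℕ∞} (h : ContDiffOn ℝ k g (Ioo (0:ℝ) 1)) :
    ContDiffOn ℝ k (five g) P2 := by
  have h1 : ContDiffOn ℝ k (fun p : ℝ × ℝ => g p.1) P2 :=
    h.comp contDiffOn_fst fun p hp => P2_fst hp
  have h2 : ContDiffOn ℝ k (fun p : ℝ × ℝ => g p.2) P2 :=
    h.comp contDiffOn_snd fun p hp => good2.maps _ _ hp
  have h3 : ContDiffOn ℝ k (fun p : ℝ × ℝ => g (p.1 / p.2)) P2 := by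
    refine h.comp (contDiffOn_fst.div contDiffOn_snd ?_) fun p hp => good3.maps _ _ hp
    rintro p ⟨h1, h2, h3⟩; linarith
  have h4 : ContDiffOn ℝ k (fun p : ℝ × ℝ => g ((p.2 - 1) / (p.1 - 1))) P2 := by
    refine h.comp (ContDiffOn.div (by fun_prop) (by fun_prop) ?_) fun p hp => good4.maps _ _ hp
    rintro p ⟨h1, h2, h3⟩; linarith
  have h5 : ContDiffOn ℝ k (fun p : ℝ × ℝ => g (p.1 * (p.2 - 1) / (p.2 * (p.1 - 1)))) P2 := by
    refine h.comp (ContDiffOn.div (by fun_prop) (by fun_prop) ?_) fun p hp => good5.maps _ _ hp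
    rintro p ⟨h1, h2, h3⟩; exact mul_ne_zero (by linarith) (by linarith)
  exact (((h1.sub h2).sub h3).sub h4).add h5

lemma param {n : ℕ∞} {f : ℝ → ℝ} {s U K : Set ℝ} (hs : IsOpen s) (hU : IsOpen U)
    (hK : IsCompact K) (hKU : K ⊆ U) (hf : IntegrableOn f K) {G : ℝ × ℝ → ℝ}
    (hG : ContDiffOn ℝ n G (s ×ˢ U)) (hG0 : ∀ p ∈ s, ∀ t ∈ U, t ∉ K → G (p, t) = 0) :
    ContDiffOn ℝ n (fun p => ∫ t in K, f t * G (p, t)) s := by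
  classical
  have hf' : LocallyIntegrable (K.indicator f) volume :=
    ((integrable_indicator_iff hK.measurableSet).2 hf).locallyIntegrable
  set H : ℝ → ℝ → ℝ := fun p t => if -t ∈ K then G (p, -t) else 0 with hH
  have hk : IsCompact (-K) := hK.neg
  have h1 : ∀ p, ∀ x, p ∈ s → x ∉ -K → H p x = 0 := by
    intro p x _ hx
    simp only [hH]
    rw [if_neg]; simpa using hx
  have h2 : ContDiffOn ℝ n (Function.HasUncurry.uncurry H) (s ×ˢ univ) := by
    rintro ⟨p, t⟩ ⟨hp, -⟩
    apply ContDiffAt.contDiffWithinAt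
    by_cases ht : -t ∈ U
    · have hat : ContDiffAt ℝ n G (p, -t) :=
        hG.contDiffAt ((hs.prod hU).mem_nhds ⟨hp, ht⟩)
      have hc : ContDiffAt ℝ n (fun q : ℝ × ℝ => G (q.1, -q.2)) (p, t) :=
        ContDiffAt.comp (p, t) (g := G) (f := fun q : ℝ × ℝ => (q.1, -q.2)) hat (by fun_prop)
      apply hc.congr_of_eventuallyEq
      have hn : (fun q : ℝ × ℝ => (q.1, -q.2)) ⁻¹' (s ×ˢ U) ∈ nhds (p, t) :=
        ((hs.prod hU).preimage (by fun_prop)).mem_nhds ⟨hp, ht⟩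
      filter_upwards [hn] with q hq
      show (if -q.2 ∈ K then G (q.1, -q.2) else 0) = _
      split_ifs with hqK
      · rfl
      · exact (hG0 _ hq.1 _ hq.2 hqK).symm
    · have hc : ContDiffAt ℝ n (fun q : ℝ × ℝ => (0:ℝ)) (p, t) := contDiffAt_const
      apply hc.congr_of_eventuallyEq
      have hn : (fun q : ℝ × ℝ => -q.2) ⁻¹' Kᶜ ∈ nhds (p, t) :=
        (hK.isClosed.isOpen_compl.preimage (by fun_prop)).mem_nhds fun h => ht (hKU h)
      filter_upwards [hn] with q hq
      exact if_neg hq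
  have := contDiffOn_convolution_right_with_param_comp (μ := volume) (ContinuousLinearMap.mul ℝ ℝ)
    (v := fun _ : ℝ => (0:ℝ)) contDiffOn_const hs hk h1 hf' h2
  refine this.congr fun p hp => ?_
  simp only [MeasureTheory.convolution, hH]
  rw [← integral_indicator hK.measurableSet]
  congr 1
  ext t
  by_cases ht : t ∈ K <;> simp [ht]

lemma rect_sub {α β a b : ℝ} (h0 : 0 < α) (h2 : β < a) (h4 : b < 1) :
    Icc α β ×ˢ Icc a b ⊆ P2 := by
  rintro ⟨x, y⟩ ⟨⟨h5, h6⟩, ⟨h7, h8⟩⟩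
  simp only at h5 h6 h7 h8
  exact ⟨by simp only; linarith, by simp only; linarith, by simp only; linarith⟩

/-- The compact image of a rectangle. -/
def KK (T : ℝ → ℝ → ℝ) (α β a b : ℝ) : Set ℝ :=
  (fun p : ℝ × ℝ => T p.1 p.2) '' (Icc α β ×ˢ Icc a b)

lemma Good.KK_compact {T S D : ℝ → ℝ → ℝ} (hT : Good T S D) {α β a b : ℝ} (h0 : 0 < α)
    (h2 : β < a) (h4 : b < 1) : IsCompact (KK T α β a b) :=
  (isCompact_Icc.prod isCompact_Icc).image_of_continuousOn (hT.contT.mono (rect_sub h0 h2 h4))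

lemma Good.KK_sub {T S D : ℝ → ℝ → ℝ} (hT : Good T S D) {α β a b : ℝ} (h0 : 0 < α)
    (h2 : β < a) (h4 : b < 1) : KK T α β a b ⊆ Ioo 0 1 := by
  rintro _ ⟨p, hp, rfl⟩
  exact hT.maps _ _ (rect_sub h0 h2 h4 hp)

lemma Good.injOn {T S D : ℝ → ℝ → ℝ} (hT : Good T S D) {x : ℝ} (hx : x ∈ Ioo (0:ℝ) 1) :
    InjOn (S x) (Ioo 0 1) := fun u hu v hv h => by
  rw [← hT.right x hx u hu, h, hT.right x hx v hv]

lemma Good.est {T S D : ℝ → ℝ → ℝ} (hT : Good T S D) {L : ℝ → ℝ} (hL : Measurable L)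
    {α β a b : ℝ} (h0 : 0 < α) (h1 : β < 1) (h2 : β < a) (h4 : b < 1) {ε : ENNReal} (hε : 0 < ε) :
    ∀ᶠ n : ℕ in Filter.atTop, ∀ x ∈ Icc α β,
      volume {y | y ∈ Icc a b ∧ (n : ℝ) < |L (T x y)|} ≤ ε := by
  set K := KK T α β a b with hKdef
  have hK : IsCompact K := hT.KK_compact h0 h2 h4
  have hKs : K ⊆ Ioo 0 1 := hT.KK_sub h0 h2 h4
  have hI : Icc α β ⊆ Ioo (0:ℝ) 1 := fun x hx => ⟨by linarith [hx.1], by linarith [hx.2]⟩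
  obtain ⟨c, hc⟩ := (isCompact_Icc.prod hK).exists_bound_of_continuousOn
    (hT.smD.continuousOn.mono (prod_mono hI hKs))
  set B : ℕ → Set ℝ := fun n => K ∩ {u | (n : ℝ) < |L u|} with hB
  have hBm : ∀ n, MeasurableSet (B n) := fun n =>
    hK.measurableSet.inter (measurableSet_lt measurable_const hL.abs)
  have hanti : Antitone B := by
    rintro m n hmn u ⟨hu, hu'⟩
    have hmn2 : (m : ℝ) ≤ n := by exact_mod_cast hmn
    rw [mem_ofPred_eq] at hu'
    refine ⟨hu, ?_⟩
    rw [mem_ofPred_eq]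
    exact hmn2.trans_lt hu'
  have hlim : Filter.Tendsto (fun n => volume (B n)) Filter.atTop (nhds 0) := by
    have := tendsto_measure_iInter_atTop (μ := volume) (fun n => (hBm n).nullMeasurableSet)
      hanti ⟨0, ((measure_mono inter_subset_left).trans_lt hK.measure_lt_top).ne⟩
    have he : ⋂ n, B n = ∅ := by
      ext u
      simp only [mem_iInter, mem_empty_iff_false, iff_false, not_forall]
      obtain ⟨n, hn⟩ := exists_nat_ge |L u|
      exact ⟨n, fun h => absurd h.2 (not_lt.2 hn)⟩
    rw [he, measure_empty] at this
    exact this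
  have hlim2 : Filter.Tendsto (fun n => ENNReal.ofReal c * volume (B n)) Filter.atTop (nhds 0) := by
    have := ENNReal.Tendsto.const_mul (a := ENNReal.ofReal c) hlim (Or.inr ENNReal.ofReal_ne_top)
    rwa [mul_zero] at this
  filter_upwards [hlim2.eventually_lt_const hε] with n hn x hx
  refine le_trans ?_ hn.le
  have hBI : B n ⊆ Ioo 0 1 := inter_subset_left.trans hKs
  calc volume {y | y ∈ Icc a b ∧ (n : ℝ) < |L (T x y)|} ≤ volume (S x '' B n) := by
        apply measure_mono
        rintro y ⟨hy, hy2⟩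
        exact ⟨T x y, ⟨⟨(x, y), ⟨hx, hy⟩, rfl⟩, hy2⟩, hT.left _ _ (rect_sub h0 h2 h4 ⟨hx, hy⟩)⟩
    _ = ∫⁻ y in S x '' B n, 1 := by simp
    _ = ∫⁻ u in B n, ENNReal.ofReal |D x u| * 1 :=
        lintegral_image_eq_lintegral_abs_deriv_mul (hBm n)
          (fun u hu => (hT.der x (hI hx) u (hBI hu)).hasDerivWithinAt)
          ((hT.injOn (hI hx)).mono hBI) _
    _ ≤ ∫⁻ u in B n, ENNReal.ofReal c := by
        apply setLIntegral_mono measurable_const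
        intro u hu
        rw [mul_one]
        apply ENNReal.ofReal_le_ofReal
        simpa using hc (x, u) ⟨hx, hu.1⟩
    _ = ENNReal.ofReal c * volume (B n) := by simp

lemma ae_sections {p : ℝ × ℝ → Prop} (h : ∀ᵐ q ∂(volume.restrict P2), p q) :
    ∀ᵐ x : ℝ, ∀ᵐ y : ℝ, (x, y) ∈ P2 → p (x, y) := by
  rw [ae_restrict_iff' isOpen_P2.measurableSet, Measure.volume_eq_prod] at h
  exact Measure.ae_ae_of_ae_prod h

lemma ess_bdd {L : ℝ → ℝ} (hL : Measurable L) {g : ℝ × ℝ → ℝ} {M : ℝ}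
    (hM : ∀ᵐ p ∂(volume.restrict P2), |g p| ≤ M)
    (heq : ∀ᵐ p ∂(volume.restrict P2), five L p = g p)
    {α β a b : ℝ} (h0 : 0 < α) (h1 : β < 1) (h2 : β < a) (h3 : a < b) (h4 : b < 1) :
    ∃ B : ℝ, ∀ᵐ x ∂(volume.restrict (Ioo α β)), |L x| ≤ B := by
  have hε : 0 < ENNReal.ofReal ((b - a) / 5) := by
    rw [ENNReal.ofReal_pos]; linarith
  obtain ⟨n, e2, e3, e4, e5⟩ := ((good2.est hL h0 h1 h2 h4 hε).and
    ((good3.est hL h0 h1 h2 h4 hε).and ((good4.est hL h0 h1 h2 h4 hε).and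
      (good5.est hL h0 h1 h2 h4 hε)))).exists
  refine ⟨4 * n + M, ?_⟩
  rw [ae_restrict_iff' measurableSet_Ioo]
  filter_upwards [ae_sections hM, ae_sections heq] with x hx1 hx2 hx
  have hx' : x ∈ Icc α β := Ioo_subset_Icc_self hx
  have hN : volume {y | ¬ ((x, y) ∈ P2 → |g (x, y)| ≤ M ∧ five L (x, y) = g (x, y))} = 0 := by
    rw [← ae_iff]
    filter_upwards [hx1, hx2] with y k1 k2 k3 using ⟨k1 k3, k2 k3⟩
  by_contra hcon
  push Not at hcon
  have hsub : Icc a b ⊆ {y | ¬ ((x, y) ∈ P2 → |g (x, y)| ≤ M ∧ five L (x, y) = g (x, y))} ∪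
      ({y | y ∈ Icc a b ∧ (n : ℝ) < |L y|} ∪ ({y | y ∈ Icc a b ∧ (n : ℝ) < |L (x / y)|} ∪
      ({y | y ∈ Icc a b ∧ (n : ℝ) < |L ((y - 1) / (x - 1))|} ∪
      {y | y ∈ Icc a b ∧ (n : ℝ) < |L (x * (y - 1) / (y * (x - 1)))|}))) := by
    intro y hy
    by_contra hc
    simp only [mem_union, mem_ofPred_eq, not_or, not_and, not_lt, not_not] at hc
    obtain ⟨c1, c2, c3, c4, c5⟩ := hc
    obtain ⟨c6, c7⟩ := c1 (rect_sub h0 h2 h4 ⟨hx', hy⟩)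
    replace c2 := abs_le.1 (c2 hy)
    replace c3 := abs_le.1 (c3 hy)
    replace c4 := abs_le.1 (c4 hy)
    replace c5 := abs_le.1 (c5 hy)
    have c6 := abs_le.1 c6
    simp only [five] at c7
    apply absurd hcon (not_lt.2 _)
    rw [abs_le]
    constructor <;> linarith [c2.1, c2.2, c3.1, c3.2, c4.1, c4.2, c5.1, c5.2, c6.1, c6.2]
  have hle := (measure_mono hsub).trans ((measure_union_le _ _).trans (add_le_add hN.le
    ((measure_union_le _ _).trans (add_le_add (e2 x hx') ((measure_union_le _ _).trans
      (add_le_add (e3 x hx') ((measure_union_le _ _).trans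
        (add_le_add (e4 x hx') (e5 x hx')))))))))
  have h5 : 0 ≤ (b - a) / 5 := by linarith
  rw [Real.volume_Icc, zero_add, ← ENNReal.ofReal_add h5 h5, ← ENNReal.ofReal_add h5 (by linarith),
    ← ENNReal.ofReal_add h5 (by linarith), ENNReal.ofReal_le_ofReal_iff (by linarith)] at hle
  linarith

lemma loc_int {L : ℝ → ℝ} (hL : Measurable L) {g : ℝ × ℝ → ℝ} {M : ℝ}
    (hM : ∀ᵐ p ∂(volume.restrict P2), |g p| ≤ M)
    (heq : ∀ᵐ p ∂(volume.restrict P2), five L p = g p) :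
    LocallyIntegrableOn L (Ioo (0:ℝ) 1) := by
  rintro x ⟨hx0, hx1⟩
  obtain ⟨B, hB⟩ := ess_bdd hL hM heq (α := x / 2) (β := (2 * x + 1) / 3) (a := (x + 1) / 2)
    (b := (x + 2) / 3) (by linarith) (by linarith) (by linarith) (by linarith) (by linarith)
  refine ⟨Ioo (x / 2) ((2 * x + 1) / 3), mem_nhdsWithin_of_mem_nhds
    (Ioo_mem_nhds (by linarith) (by linarith)), ?_⟩
  exact Measure.integrableOn_of_bounded (by simp) hL.aestronglyMeasurable hB

lemma Good.transfer {T S D : ℝ → ℝ → ℝ} (hT : Good T S D) {L : ℝ → ℝ}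
    (hL : LocallyIntegrableOn L (Ioo (0:ℝ) 1)) (n : ℕ∞) {φ : ℝ → ℝ} (hφ : ContDiff ℝ (⊤ : ℕ∞) φ)
    {α β a b : ℝ} (h0 : 0 < α) (h1 : β < 1) (h2 : β < a) (h4 : b < 1)
    (hφ0 : ∀ y, y ∉ Icc a b → φ y = 0) :
    (∀ x ∈ Ioo α β, Integrable (fun y => φ y * L (T x y))) ∧
    ContDiffOn ℝ n (fun x => ∫ y, φ y * L (T x y)) (Ioo α β) := by
  set K := KK T α β a b with hKdef
  have hK : IsCompact K := hT.KK_compact h0 h2 h4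
  have hKs : K ⊆ Ioo 0 1 := hT.KK_sub h0 h2 h4
  have hI : Ioo α β ⊆ Ioo (0:ℝ) 1 := fun x hx => ⟨by linarith [hx.1], by linarith [hx.2]⟩
  have hLK : IntegrableOn L K := hL.integrableOn_compact_subset hKs hK
  set G : ℝ × ℝ → ℝ := fun p => φ (S p.1 p.2) * |D p.1 p.2| with hG
  have hGs : ContDiffOn ℝ (⊤ : ℕ∞) G (Ioo (0:ℝ) 1 ×ˢ Ioo (0:ℝ) 1) :=
    (hφ.comp_contDiffOn hT.smS).mul hT.smD
  have hGz : ∀ p ∈ Ioo α β, ∀ t ∈ Ioo (0:ℝ) 1, t ∉ K → G (p, t) = 0 := by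
    intro x hx u hu huK
    have : S x u ∉ Icc a b := fun h =>
      huK ⟨(x, S x u), ⟨Ioo_subset_Icc_self hx, h⟩, hT.right x (hI hx) u hu⟩
    simp only [hG, hφ0 _ this, zero_mul]
  have hz : ∀ x ∈ Ioo α β, ∀ y, y ∉ S x '' K → φ y * L (T x y) = 0 := by
    intro x hx y hy
    rw [hφ0, zero_mul]
    intro h
    exact hy ⟨T x y, ⟨(x, y), ⟨Ioo_subset_Icc_self hx, h⟩, rfl⟩,
      hT.left _ _ (rect_sub h0 h2 h4 ⟨Ioo_subset_Icc_self hx, h⟩)⟩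
  have hcong : ∀ x ∈ Ioo α β, ∀ u ∈ K,
      |D x u| • (φ (S x u) * L (T x (S x u))) = L u * G (x, u) := by
    intro x hx u hu
    rw [hT.right x (hI hx) u (hKs hu)]
    simp only [hG, smul_eq_mul]; ring
  constructor
  · intro x hx
    have hi : IntegrableOn (fun y => φ y * L (T x y)) (S x '' K) := by
      rw [integrableOn_image_iff_integrableOn_abs_deriv_smul hK.measurableSet
        (fun u hu => (hT.der x (hI hx) u (hKs hu)).hasDerivWithinAt)
        ((hT.injOn (hI hx)).mono hKs)]
      rw [integrableOn_congr_fun (hcong x hx) hK.measurableSet]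
      apply hLK.mul_continuousOn _ hK
      exact hGs.continuousOn.comp (by fun_prop) fun u hu => ⟨hI hx, hKs hu⟩
    refine (integrableOn_iff_integrable_of_support_subset ?_).1 hi
    intro y hy
    by_contra h
    exact hy (hz x hx y h)
  · have := param (n := n) isOpen_Ioo isOpen_Ioo hK hKs hLK
      ((hGs.mono (prod_mono hI Subset.rfl)).of_le (by exact_mod_cast le_top)) hGz
    refine this.congr fun x hx => ?_
    rw [← setIntegral_eq_integral_of_forall_compl_eq_zero (hz x hx),
      integral_image_eq_integral_abs_deriv_smul hK.measurableSet
        (fun u hu => (hT.der x (hI hx) u (hKs hu)).hasDerivWithinAt)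
        ((hT.injOn (hI hx)).mono hKs)]
    exact setIntegral_congr_fun hK.measurableSet (hcong x hx)

lemma local_rep {L : ℝ → ℝ} (hL : LocallyIntegrableOn L (Ioo (0:ℝ) 1)) {g : ℝ × ℝ → ℝ} {k : ℕ∞}
    (hg : ContDiffOn ℝ k g P2)
    (heq : ∀ᵐ p ∂(volume.restrict P2), five L p = g p)
    {α β a b : ℝ} (h0 : 0 < α) (h1 : β < 1) (h2 : β < a) (h3 : a < b) (h4 : b < 1) :
    ∃ h : ℝ → ℝ, ContDiffOn ℝ k h (Ioo α β) ∧ ∀ᵐ x ∂(volume.restrict (Ioo α β)), L x = h x := by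
  let φ : ContDiffBump ((a + b) / 2 : ℝ) := ⟨(b - a) / 4, (b - a) / 2, by linarith, by linarith⟩
  have hφ0 : ∀ y, y ∉ Icc a b → φ y = 0 := by
    intro y hy
    apply φ.zero_of_le_dist
    show (b - a) / 2 ≤ _
    by_contra hc
    push Not at hc
    rw [Real.dist_eq, abs_lt] at hc
    exact hy ⟨by linarith [hc.1], by linarith [hc.2]⟩
  have hφs : ContDiff ℝ (⊤ : ℕ∞) φ := φ.contDiff
  obtain ⟨i2, s2⟩ := good2.transfer hL k hφs h0 h1 h2 h4 hφ0
  obtain ⟨i3, s3⟩ := good3.transfer hL k hφs h0 h1 h2 h4 hφ0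
  obtain ⟨i4, s4⟩ := good4.transfer hL k hφs h0 h1 h2 h4 hφ0
  obtain ⟨i5, s5⟩ := good5.transfer hL k hφs h0 h1 h2 h4 hφ0
  have hsubP : Ioo α β ×ˢ Ioo β 1 ⊆ P2 := by
    rintro ⟨x, y⟩ ⟨hx, hy⟩
    exact ⟨h0.trans hx.1, hx.2.trans hy.1, hy.2⟩
  have hJU : Icc a b ⊆ Ioo β 1 := fun y hy => ⟨by linarith [hy.1], by linarith [hy.2]⟩
  have hGc : ContDiffOn ℝ k (fun p : ℝ × ℝ => φ p.2 * g p) (Ioo α β ×ˢ Ioo β 1) :=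
    ContDiffOn.mul ((φ.contDiff.comp contDiff_snd).contDiffOn) (hg.mono hsubP)
  have s1 := param (n := k) (f := fun _ => (1:ℝ)) (isOpen_Ioo (a := α) (b := β))
    (isOpen_Ioo (a := β) (b := 1)) (isCompact_Icc (a := a) (b := b)) hJU
    (by simp) hGc (fun p _ t _ ht => by simp [hφ0 t ht])
  simp only [one_mul] at s1
  have hpos : 0 < ∫ y, φ y := φ.integral_pos
  refine ⟨fun x => (∫ y, φ y)⁻¹ * ((∫ y in Icc a b, φ y * g (x, y)) + (∫ y, φ y * L y) +
    (∫ y, φ y * L (x / y)) + (∫ y, φ y * L ((y - 1) / (x - 1))) -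
    (∫ y, φ y * L (x * (y - 1) / (y * (x - 1))))),
    contDiffOn_const.mul ((((s1.add s2).add s3).add s4).sub s5), ?_⟩
  rw [ae_restrict_iff' measurableSet_Ioo]
  filter_upwards [ae_sections heq] with x hx2 hx
  have hgi : IntegrableOn (fun y => φ y * g (x, y)) (Icc a b) := by
    apply ContinuousOn.integrableOn_compact isCompact_Icc
    exact hGc.continuousOn.comp (f := fun y => (x, y)) (by fun_prop) fun y hy => ⟨hx, hJU hy⟩
  have hgi' : Integrable ((Icc a b).indicator (fun y => φ y * g (x, y))) :=
    (integrable_indicator_iff measurableSet_Icc).2 hgi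
  rw [← integral_indicator measurableSet_Icc, ← integral_add hgi' (i2 x hx),
    ← integral_add (hgi'.fun_add (i2 x hx)) (i3 x hx),
    ← integral_add ((hgi'.fun_add (i2 x hx)).fun_add (i3 x hx)) (i4 x hx),
    ← integral_sub (((hgi'.fun_add (i2 x hx)).fun_add (i3 x hx)).fun_add (i4 x hx)) (i5 x hx)]
  rw [eq_inv_mul_iff_mul_eq₀ hpos.ne', ← integral_mul_const]
  apply integral_congr_ae
  filter_upwards [hx2] with y hy
  by_cases hyJ : y ∈ Icc a b
  · have := hy (hsubP ⟨hx, hJU hyJ⟩)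
    simp only [five] at this
    simp only [hyJ, indicator_of_mem, ← this]
    ring
  · simp only [hyJ, not_false_eq_true, indicator_of_notMem, hφ0 y hyJ]
    ring

lemma glue {L : ℝ → ℝ} {k : ℕ∞} (H : ∀ x ∈ Ioo (0:ℝ) 1, ∃ α β, α < x ∧ x < β ∧ 0 < α ∧ β < 1 ∧
    ∃ h : ℝ → ℝ, ContDiffOn ℝ k h (Ioo α β) ∧
      ∀ᵐ x ∂(volume.restrict (Ioo α β)), L x = h x) :
    ∃ g : ℝ → ℝ, ContDiffOn ℝ k g (Ioo (0:ℝ) 1) ∧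
        ∀ᵐ x ∂(volume.restrict (Ioo (0:ℝ) 1)), L x = g x := by
  choose! α β hα hβ hα0 hβ1 h hs hae using H
  have key : ∀ x ∈ Ioo (0:ℝ) 1, ∀ y ∈ Ioo (α x) (β x), h y y = h x y := by
    intro x hx y hy
    have hy01 : y ∈ Ioo (0:ℝ) 1 := ⟨(hα0 x hx).trans hy.1, hy.2.trans (hβ1 x hx)⟩
    have he : h y =ᵐ[volume.restrict (Ioo (α x) (β x) ∩ Ioo (α y) (β y))] h x := by
      filter_upwards [ae_restrict_of_ae_restrict_of_subset inter_subset_left (hae x hx),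
        ae_restrict_of_ae_restrict_of_subset inter_subset_right (hae y hy01)] with t h1 h2
      rw [← h1, h2]
    exact Measure.eqOn_open_of_ae_eq he (isOpen_Ioo.inter isOpen_Ioo)
      ((hs y hy01).continuousOn.mono inter_subset_right)
      ((hs x hx).continuousOn.mono inter_subset_left) ⟨hy, hα y hy01, hβ y hy01⟩
  refine ⟨fun x => h x x, ?_, ?_⟩
  · intro x hx
    apply ContDiffAt.contDiffWithinAt
    have hn : Ioo (α x) (β x) ∈ nhds x := Ioo_mem_nhds (hα x hx) (hβ x hx)
    refine ((hs x hx).contDiffAt hn).congr_of_eventuallyEq ?_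
    filter_upwards [hn] with y hy using key x hx y hy
  · rw [ae_restrict_iff' measurableSet_Ioo, ae_iff]
    apply measure_null_of_locally_null
    intro x hx
    simp only [mem_ofPred_eq, Classical.not_imp] at hx
    have hn : Ioo (α x) (β x) ∈ nhds x := Ioo_mem_nhds (hα x hx.1) (hβ x hx.1)
    refine ⟨_, Filter.inter_mem self_mem_nhdsWithin (mem_nhdsWithin_of_mem_nhds hn), ?_⟩
    have := hae x hx.1
    rw [ae_restrict_iff' measurableSet_Ioo, ae_iff] at this
    refine measure_mono_null ?_ this
    rintro y ⟨hy1, hy2⟩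
    simp only [mem_ofPred_eq, Classical.not_imp] at hy1 ⊢
    exact ⟨hy2, by rw [← key x hx.1 y hy2]; exact hy1.2⟩

/-- **Regularity** for the perturbed Spence–Abel system: for `k ∈ ℕ ∪ {∞}`, the solution `L`
agrees almost everywhere with a `C^k` function on `(0,1)` if and only if `R` agrees almost
everywhere with a `C^k` function on the open set `P₂`. -/
theorem perturbed_spence_abel_regularity (R : ℝ × ℝ → ℝ)
    (hR : AEMeasurable R (volume.restrict P2))
    (hRbdd : ∃ M : ℝ, ∀ᵐ p ∂(volume.restrict P2), |R p| ≤ M)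
    (h6 : SixTermAE R) (hsym : SymmAE R) (C : ℝ) (L : ℝ → ℝ)
    (hL : AEMeasurable L (volume.restrict (Set.Ioo (0:ℝ) 1)))
    (hsol : SolvesAE R C L) (k : ℕ∞) :
    (∃ g : ℝ → ℝ, ContDiffOn ℝ k g (Set.Ioo (0:ℝ) 1) ∧
        ∀ᵐ x ∂(volume.restrict (Set.Ioo (0:ℝ) 1)), L x = g x) ↔
      (∃ g : ℝ × ℝ → ℝ, ContDiffOn ℝ k g P2 ∧
        ∀ᵐ p ∂(volume.restrict P2), R p = g p) := by
  have h5 : ∀ᵐ p ∂(volume.restrict P2), five L p = R p := hsol.1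
  constructor
  · rintro ⟨g, hg, hLg⟩
    refine ⟨five g, five_contDiffOn hg, ?_⟩
    filter_upwards [h5, five_congr hLg] with p h1 h2
    rw [← h1, h2]
  · rintro ⟨g, hg, hRg⟩
    obtain ⟨M, hM⟩ := hRbdd
    have hM' : ∀ᵐ p ∂(volume.restrict P2), |g p| ≤ M := by
      filter_upwards [hM, hRg] with p h1 h2
      rwa [← h2]
    have heq : ∀ᵐ p ∂(volume.restrict P2), five (hL.mk L) p = g p := by
      filter_upwards [five_congr hL.ae_eq_mk, h5, hRg] with p h1 h2 h3
      rw [← h1, h2, h3]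
    have hli := loc_int hL.measurable_mk hM' heq
    have hfin : ∃ h : ℝ → ℝ, ContDiffOn ℝ k h (Ioo (0:ℝ) 1) ∧
        ∀ᵐ x ∂(volume.restrict (Ioo (0:ℝ) 1)), hL.mk L x = h x := by
      apply glue
      rintro x ⟨hx0, hx1⟩
      refine ⟨x / 2, (2 * x + 1) / 3, by linarith, by linarith, by linarith, by linarith, ?_⟩
      exact local_rep hli hg heq (a := (x + 1) / 2) (b := (x + 2) / 3) (by linarith) (by linarith)
        (by linarith) (by linarith) (by linarith)
    obtain ⟨h, hh, hae⟩ := hfin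
    refine ⟨h, hh, ?_⟩
    filter_upwards [hae, hL.ae_eq_mk] with x h1 h2
    rw [h2, h1]
end
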